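/- Let F'_y be the maximal isotropic flag (ı e_l + √2 ı e_0 - ı e_{-l} ⊂ e_1 ⊂ e_2 ⊂ ⋯ ⊂ e_{l-1}) in ℂ^{2l+1}. Then the stabilizer of F'_y in K, namely {g ∈ K : g·F'_y = F'_y}, equals B_{2l-1} := {g ∈ SO(2l+1) : g e_0 = e_0, g(e_l - e_{-l}) = e_l - e_{-l}, and the matrix of g with respect to the ordered basis (e_1,…,e_l,e_0,e_{-l},…,e_{-1}) is upper triangular} (B_{2l-1} is a Borel subgroup of the copy of SO(2l-1) inside K). -/

import Mathlib

open Module Submodule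

noncomputable section

/-- `stdVec n m` is the `m`-th standard basis vector of `ℂ^n` (1-indexed); `0` out of range. -/
def stdVec (n m : ℕ) : Fin n → ℂ :=
  if h : 1 ≤ m ∧ m ≤ n then Pi.single (⟨m - 1, by omega⟩ : Fin n) 1 else 0

/-- `stdSub n k` is the subspace `U_k = span(e_1, …, e_k)` of `ℂ^n`. -/
def stdSub (n k : ℕ) : Submodule ℂ (Fin n → ℂ) :=
  span ℂ (stdVec n '' Set.Icc 1 k)

/-- The action of an invertible linear map of `ℂ^n` on a chain of subspaces. -/
def actFlag (n : ℕ) (g : (Fin n → ℂ) ≃ₗ[ℂ] (Fin n → ℂ))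
    (V : ℕ → Submodule ℂ (Fin n → ℂ)) (k : ℕ) : Submodule ℂ (Fin n → ℂ) :=
  Submodule.map g.toLinearMap (V k)

/-- The orbit of the chain `V` under a set `B` of invertible linear maps. -/
def orbitOf (n : ℕ) (B : Set ((Fin n → ℂ) ≃ₗ[ℂ] (Fin n → ℂ)))
    (V : ℕ → Submodule ℂ (Fin n → ℂ)) : Set (ℕ → Submodule ℂ (Fin n → ℂ)) :=
  {V' | ∃ b ∈ B, actFlag n b V = V'}

/-- The symmetric bilinear form `β(x,y) = ∑_{k=1}^n x_k y_{n+1-k}` on `ℂ^n`. -/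
def betaF (n : ℕ) (x y : Fin n → ℂ) : ℂ := ∑ k : Fin n, x k * y k.rev

/-- `SO(n,ℂ)` for the form `β`. -/
def SOgrp (n : ℕ) : Set ((Fin n → ℂ) ≃ₗ[ℂ] (Fin n → ℂ)) :=
  {g | LinearMap.det g.toLinearMap = 1 ∧ ∀ x y, betaF n (g x) (g y) = betaF n x y}

/-- A maximal isotropic flag `V 1 ⊂ ⋯ ⊂ V l` in `ℂ^n` (values pinned outside `1..l`
so that two flags are equal iff they agree in degrees `1, …, l`). -/
def IsIsoFlag (n l : ℕ) (V : ℕ → Submodule ℂ (Fin n → ℂ)) : Prop :=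
  (∀ i, i ≤ l → finrank ℂ ↥(V i) = i) ∧ (∀ i, V i ≤ V (i + 1)) ∧ (∀ i, l ≤ i → V i = V l) ∧
    (∀ u ∈ V l, ∀ w ∈ V l, betaF n u w = 0)

/-- The isotropic flag `(v 1 ⊂ ⋯ ⊂ v l)` spanned by `v 1, …, v l`. -/
def isoFlagOf (n l : ℕ) (v : ℕ → Fin n → ℂ) (k : ℕ) : Submodule ℂ (Fin n → ℂ) :=
  span ℂ (v '' Set.Icc 1 (min k l))

/-- `K = {g ∈ SO(2l+1) : g e_0 = e_0}` (here `e_0 = e_{l+1}`), a copy of `SO(2l)`. -/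
def Kodd (l : ℕ) : Set ((Fin (2 * l + 1) → ℂ) ≃ₗ[ℂ] (Fin (2 * l + 1) → ℂ)) :=
  {g | g ∈ SOgrp (2 * l + 1) ∧
       g (stdVec (2 * l + 1) (l + 1)) = stdVec (2 * l + 1) (l + 1)}

/-- `V'` lies in the `K`-orbit of `V`. -/
def InKOddOrbit (l : ℕ) (V V' : ℕ → Submodule ℂ (Fin (2 * l + 1) → ℂ)) : Prop :=
  ∃ g ∈ Kodd l, actFlag (2 * l + 1) g V = V'

/-- The maximal isotropic flag
`F'_y = (ı e_l + √2 ı e_0 - ı e_{-l} ⊂ e_1 ⊂ e_2 ⊂ ⋯ ⊂ e_{l-1})` in `ℂ^{2l+1}`. -/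
def FyOddVec (l m : ℕ) : Fin (2 * l + 1) → ℂ :=
  if m = 1 then
    Complex.I • stdVec (2 * l + 1) l +
      ((Real.sqrt 2 : ℂ) * Complex.I) • stdVec (2 * l + 1) (l + 1) -
      Complex.I • stdVec (2 * l + 1) (l + 2)
  else stdVec (2 * l + 1) (m - 1)

def FyOddFlag (l : ℕ) : ℕ → Submodule ℂ (Fin (2 * l + 1) → ℂ) :=
  isoFlagOf (2 * l + 1) l (FyOddVec l)

/-- `B_{2l-1}`: elements of `SO(2l+1)` fixing `e_0` and `e_l - e_{-l}` whose matrix in the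
ordered basis `(e_1, …, e_l, e_0, e_{-l}, …, e_{-1})` (the standard ordered basis) is
upper triangular; a Borel subgroup of the copy of `SO(2l-1)` inside `K`. -/
def BOddSmall (l : ℕ) : Set ((Fin (2 * l + 1) → ℂ) ≃ₗ[ℂ] (Fin (2 * l + 1) → ℂ)) :=
  {g | g ∈ SOgrp (2 * l + 1) ∧
       g (stdVec (2 * l + 1) (l + 1)) = stdVec (2 * l + 1) (l + 1) ∧
       g (stdVec (2 * l + 1) l - stdVec (2 * l + 1) (l + 2)) =
         stdVec (2 * l + 1) l - stdVec (2 * l + 1) (l + 2) ∧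
       ∀ m, 1 ≤ m → m ≤ 2 * l + 1 →
         g (stdVec (2 * l + 1) m) ∈ stdSub (2 * l + 1) m}

/-!
The coordinate `x ↦ β(e_0, x)` is invariant under `g ∈ K`, does not vanish on the first vector of
`F'_y` and vanishes on `U_k = span(e_1, …, e_k)` for `k ≤ l`. Hence `g` stabilizes `F'_y` iff it
fixes that vector, which amounts to fixing `e_l - e_{-l}`, and stabilizes `U_k` for all `k < l`.

Since `U_{n-k}` is the orthogonal complement of `U_k`, such a `g` is upper triangular as soon as it
also stabilizes `U_l`. Modulo `U_{l-1}`, the image of `e_l` is either `e_l` or `-e_{-l}`. In the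
second case the composite of `g` with the reflection in `e_l - e_{-l}` is an upper triangular
isometry fixing `e_0`, so its diagonal entries cancel in pairs and its determinant is `1`; but a
reflection has determinant `-1`, which contradicts `det g = 1`.
-/

section General

variable {R V : Type*} [CommRing R] [AddCommGroup V] [Module R V]

theorem map_orthogonal_of_isOrthogonal {B : LinearMap.BilinForm R V} {g : V ≃ₗ[R] V}
    (hg : B.IsOrthogonal g) (W : Submodule R V) :
    (B.orthogonal W).map g.toLinearMap = B.orthogonal (W.map g.toLinearMap) := by
  apply le_antisymm
  · rintro _ ⟨x, hx, rfl⟩ _ ⟨w, hw, rfl⟩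
    exact (hg w x).trans (hx w hw)
  · intro y hy
    obtain ⟨x, rfl⟩ := g.surjective y
    exact mem_map_of_mem fun w hw ↦ (hg w x).symm.trans (hy _ (mem_map_of_mem hw))

theorem det_reflection [Module.Free R V] [Module.Finite R V] {f : Dual R V} {v : V}
    (h : f v = 2) : LinearMap.det (Module.reflection h).toLinearMap = -1 := by
  have h_transvection : (Module.reflection h).toLinearMap = LinearMap.transvection f (-v) := by
    ext x
    simp [Module.reflection_apply, LinearMap.transvection.apply, sub_eq_add_neg]
  rw [h_transvection, LinearMap.transvection.det, map_neg, h]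
  norm_num

theorem reflection_coroot_apply_of_apply_eq_zero {B : LinearMap.BilinForm R V} {v x : V}
    (hv : B.IsReflective v) (hx : B v x = 0) : Module.reflection hv.coroot_apply_self x = x := by
  have h_coroot : LinearMap.IsReflective.coroot B hv x = 0 :=
    hv.regular.left <| by simp [hx]
  rw [Module.reflection_apply, h_coroot, zero_smul, sub_zero]

variable [IsDomain R] {f : Dual R V} {v : V} {W : Submodule R V}

theorem mem_of_mem_span_singleton_sup (hv : f v ≠ 0) (hW : W ≤ LinearMap.ker f) {x : V}
    (hx : x ∈ span R {v} ⊔ W) (hfx : f x = 0) : x ∈ W := by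
  obtain ⟨_, hy, w, hw, rfl⟩ := mem_sup.1 hx
  obtain ⟨a, rfl⟩ := mem_span_singleton.1 hy
  have hfw : f w = 0 := hW hw
  have ha : a = 0 := by simpa [hfw, hv] using hfx
  simpa [ha] using hw

theorem map_eq_of_map_span_singleton_sup_eq {g : V ≃ₗ[R] V} (hg : ∀ x, f (g x) = f x)
    (hv : f v ≠ 0) (hW : W ≤ LinearMap.ker f)
    (h : (span R {v} ⊔ W).map g.toLinearMap = span R {v} ⊔ W) : W.map g.toLinearMap = W := by
  apply le_antisymm
  · rintro _ ⟨x, hx, rfl⟩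
    refine mem_of_mem_span_singleton_sup hv hW (h.le (mem_map_of_mem (mem_sup_right hx))) ?_
    exact (hg x).trans (hW hx)
  · intro x hx
    obtain ⟨y, hy, rfl⟩ := h.ge (mem_sup_right hx)
    exact mem_map_of_mem (mem_of_mem_span_singleton_sup hv hW hy ((hg y).symm.trans (hW hx)))

theorem apply_eq_self_of_map_span_singleton_eq {g : V ≃ₗ[R] V} (hg : ∀ x, f (g x) = f x)
    (hv : f v ≠ 0) (h : (span R {v}).map g.toLinearMap = span R {v}) : g v = v := by
  obtain ⟨a, ha⟩ := mem_span_singleton.1 (h.le (mem_map_of_mem (mem_span_singleton_self v)))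
  have ha' : a • v = g v := ha
  have h_scalar : a * f v = f v := by rw [← smul_eq_mul, ← map_smul, ha', hg]
  rw [← ha', (mul_eq_right₀ hv).1 h_scalar, one_smul]

end General

section StandardFlag

variable {n : ℕ}

theorem stdVec_val_add_one (i : Fin n) : stdVec n (i + 1) = Pi.single i 1 := by
  simp [stdVec]

theorem stdVec_eq_single {m : ℕ} (hm : 1 ≤ m) (hmn : m ≤ n) :
    stdVec n m = Pi.single ⟨m - 1, by omega⟩ 1 :=
  dif_pos ⟨hm, hmn⟩

theorem stdVec_apply (m : ℕ) (i : Fin n) : stdVec n m i = if i + 1 = m then 1 else 0 := by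
  unfold stdVec
  split_ifs <;> simp [Pi.single_apply, Fin.ext_iff] <;> omega

theorem stdVec_mem_stdSub {m k : ℕ} (hm : 1 ≤ m) (hmk : m ≤ k) : stdVec n m ∈ stdSub n k :=
  subset_span ⟨m, ⟨hm, hmk⟩, rfl⟩

theorem stdSub_mono : Monotone (stdSub n) :=
  fun _ _ hkl ↦ span_mono <| Set.image_mono <| Set.Icc_subset_Icc_right hkl

theorem stdSub_zero : stdSub n 0 = ⊥ := by
  simp [stdSub]

theorem stdSub_succ (k : ℕ) : stdSub n (k + 1) = span ℂ {stdVec n (k + 1)} ⊔ stdSub n k := by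
  rw [stdSub, ← Set.insert_Icc_right_eq_Icc_add_one (by omega), Set.image_insert_eq,
    span_insert, stdSub]

theorem mem_stdSub_iff {k : ℕ} {x : Fin n → ℂ} :
    x ∈ stdSub n k ↔ ∀ i : Fin n, k ≤ i → x i = 0 := by
  constructor
  · intro hx i hi
    have h_le : stdSub n k ≤ LinearMap.ker (LinearMap.proj (R := ℂ) (φ := fun _ ↦ ℂ) i) := by
      rw [stdSub, span_le]
      rintro _ ⟨m, ⟨-, hmk⟩, rfl⟩
      simp only [SetLike.mem_coe, LinearMap.mem_ker, LinearMap.proj_apply, stdVec_apply]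
      exact if_neg (by omega)
    exact h_le hx
  · intro hx
    rw [pi_eq_sum_univ' x]
    refine sum_mem fun i _ ↦ ?_
    by_cases hi : k ≤ i
    · simp [hx i hi]
    · rw [← stdVec_val_add_one]
      exact smul_mem _ _ (stdVec_mem_stdSub (by omega) (by omega))

theorem map_stdSub_eq_iff_forall_apply_stdVec_mem {g : (Fin n → ℂ) ≃ₗ[ℂ] (Fin n → ℂ)} :
    (∀ k, (stdSub n k).map g.toLinearMap = stdSub n k) ↔
      ∀ m, 1 ≤ m → m ≤ n → g (stdVec n m) ∈ stdSub n m := by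
  constructor
  · intro h m hm _
    exact (h m).le (mem_map_of_mem (stdVec_mem_stdSub hm le_rfl))
  · intro h k
    refine eq_of_le_of_finrank_eq ?_ (LinearEquiv.finrank_map_eq g _)
    rw [stdSub, map_span_le]
    rintro _ ⟨m, ⟨hm, hmk⟩, rfl⟩
    by_cases hmn : m ≤ n
    · exact stdSub_mono hmk (h m hm hmn)
    · have h_zero : stdVec n m = 0 := dif_neg (by omega)
      simp [h_zero]

theorem map_stdSub_succ_eq {g : (Fin n → ℂ) ≃ₗ[ℂ] (Fin n → ℂ)} {k : ℕ}
    (h : (stdSub n k).map g.toLinearMap = stdSub n k)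
    (h_apply : g (stdVec n (k + 1)) ∈ stdSub n (k + 1)) :
    (stdSub n (k + 1)).map g.toLinearMap = stdSub n (k + 1) := by
  refine eq_of_le_of_finrank_eq ?_ (LinearEquiv.finrank_map_eq g _)
  nth_rw 1 [stdSub_succ]
  rw [Submodule.map_sup, h, map_span, Set.image_singleton]
  exact sup_le ((span_singleton_le_iff_mem _ _).2 h_apply) (stdSub_mono k.le_succ)

end StandardFlag

section Form

variable {n : ℕ}

/-- The form `β` of `betaF`, bundled as a bilinear form so that Mathlib's orthogonal complements,
isometries and reflections apply to it. -/
def betaForm (n : ℕ) : LinearMap.BilinForm ℂ (Fin n → ℂ) :=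
  LinearMap.mk₂ ℂ (betaF n)
    (by simp [betaF, add_mul, Finset.sum_add_distrib])
    (by simp [betaF, Finset.mul_sum, mul_assoc])
    (by simp [betaF, mul_add, Finset.sum_add_distrib])
    (by simp [betaF, Finset.mul_sum, mul_left_comm])

theorem betaForm_apply (x y : Fin n → ℂ) : betaForm n x y = ∑ k, x k * y k.rev := rfl

theorem betaForm_comm (x y : Fin n → ℂ) : betaForm n x y = betaForm n y x := by
  rw [betaForm_apply, betaForm_apply, ← Equiv.sum_comp Fin.revPerm]
  simp [mul_comm]

theorem betaForm_single_left (i : Fin n) (x : Fin n → ℂ) :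
    betaForm n (Pi.single i 1) x = x i.rev := by
  simp [betaForm_apply, Pi.single_apply]

theorem betaForm_stdVec_rev (i : Fin n) (x : Fin n → ℂ) :
    betaForm n (stdVec n (i.rev + 1)) x = x i := by
  rw [stdVec_val_add_one, betaForm_single_left, Fin.rev_rev]

theorem betaForm_stdVec_stdVec {m m' : ℕ} (hm : 1 ≤ m) (hmn : m ≤ n) :
    betaForm n (stdVec n m) (stdVec n m') = if m + m' = n + 1 then 1 else 0 := by
  rw [stdVec_eq_single hm hmn, betaForm_single_left, stdVec_apply, Fin.val_rev]
  congr 1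
  simp only [eq_iff_iff]
  omega

theorem orthogonal_stdSub (k : ℕ) :
    (betaForm n).orthogonal (stdSub n (n - k)) = stdSub n k := by
  ext x
  rw [mem_stdSub_iff]
  constructor
  · intro hx i hi
    have h_mem : stdVec n (i.rev + 1) ∈ stdSub n (n - k) :=
      stdVec_mem_stdSub (by omega) (by rw [Fin.val_rev]; omega)
    exact (betaForm_stdVec_rev i x).symm.trans (hx _ h_mem)
  · intro hx y hy
    rw [mem_stdSub_iff] at hy
    rw [betaForm_apply]
    refine Finset.sum_eq_zero fun i _ ↦ ?_
    by_cases hi : n - k ≤ i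
    · rw [hy i hi, zero_mul]
    · rw [hx i.rev (by rw [Fin.val_rev]; omega), mul_zero]

theorem betaForm_eq_zero_of_mem_stdSub {j k : ℕ} (hjk : j + k ≤ n) {x y : Fin n → ℂ}
    (hx : x ∈ stdSub n j) (hy : y ∈ stdSub n k) : betaForm n x y = 0 := by
  rw [← orthogonal_stdSub] at hy
  exact hy x (stdSub_mono (by omega) hx)

theorem mem_stdSub_of_mem_succ {m k : ℕ} (hm : 1 ≤ m) (hmk : m + k = n) {x : Fin n → ℂ}
    (hx : x ∈ stdSub n (k + 1)) (h : betaForm n (stdVec n m) x = 0) : x ∈ stdSub n k := by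
  rw [mem_stdSub_iff] at hx ⊢
  intro i hi
  rcases hi.eq_or_lt with rfl | hlt
  · have h_rev : m = i.rev + 1 := by rw [Fin.val_rev]; omega
    rwa [h_rev, betaForm_stdVec_rev] at h
  · exact hx i hlt

theorem map_stdSub_eq_of_two_mul_le {g : (Fin n → ℂ) ≃ₗ[ℂ] (Fin n → ℂ)}
    (hg : (betaForm n).IsOrthogonal g)
    (h : ∀ k, 2 * k ≤ n → (stdSub n k).map g.toLinearMap = stdSub n k) (k : ℕ) :
    (stdSub n k).map g.toLinearMap = stdSub n k := by
  by_cases hk : 2 * k ≤ n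
  · exact h k hk
  · rw [← orthogonal_stdSub, map_orthogonal_of_isOrthogonal hg, h _ (by omega)]

theorem single_apply_mul_single_rev_apply_eq_one {g : (Fin n → ℂ) ≃ₗ[ℂ] (Fin n → ℂ)}
    (hg : (betaForm n).IsOrthogonal g)
    (h_upper : ∀ i j, j < i → g (Pi.single j 1) i = 0) (i : Fin n) :
    g (Pi.single i 1) i * g (Pi.single i.rev 1) i.rev = 1 := by
  calc g (Pi.single i 1) i * g (Pi.single i.rev 1) i.rev
      = betaForm n (g (Pi.single i 1)) (g (Pi.single i.rev 1)) := by
        symm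
        refine Finset.sum_eq_single i (fun k _ hki ↦ ?_)
          fun hi ↦ (hi (Finset.mem_univ i)).elim
        rcases lt_or_gt_of_ne hki with hlt | hgt
        · rw [h_upper k.rev i.rev (Fin.rev_lt_rev.2 hlt), mul_zero]
        · rw [h_upper k i hgt, zero_mul]
    _ = 1 := by rw [hg, betaForm_single_left, Pi.single_eq_same]

theorem det_eq_one_of_map_stdSub_eq {g : (Fin n → ℂ) ≃ₗ[ℂ] (Fin n → ℂ)}
    (hg : (betaForm n).IsOrthogonal g)
    (h : ∀ k, (stdSub n k).map g.toLinearMap = stdSub n k)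
    (h_mid : ∀ i : Fin n, i.rev = i → g (Pi.single i 1) i = 1) :
    LinearMap.det g.toLinearMap = 1 := by
  have h_upper : ∀ i j : Fin n, j < i → g (Pi.single j 1) i = 0 := by
    intro i j hji
    rw [← stdVec_val_add_one]
    have hj := map_stdSub_eq_iff_forall_apply_stdVec_mem.1 h (j + 1) (by omega) (by omega)
    exact mem_stdSub_iff.1 hj i hji
  have h_diag : (LinearMap.toMatrix' g.toLinearMap).det = ∏ i, g (Pi.single i 1) i := by
    have h_entry : ∀ i j, LinearMap.toMatrix' g.toLinearMap i j = g (Pi.single j 1) i :=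
      LinearMap.toMatrix'_apply _
    rw [Matrix.det_of_isUpperTriangular fun i j hji ↦ (h_entry i j).trans (h_upper i j hji)]
    simp only [h_entry]
  rw [← LinearMap.det_toMatrix', h_diag]
  exact Finset.prod_involution (fun i _ ↦ i.rev)
    (fun i _ ↦ single_apply_mul_single_rev_apply_eq_one hg h_upper i)
    (fun i _ hne heq ↦ hne (h_mid i heq)) (by simp) (by simp)

end Form

section OddDimension

variable {l : ℕ} {g : (Fin (2 * l + 1) → ℂ) ≃ₗ[ℂ] (Fin (2 * l + 1) → ℂ)}

/-- The vector `e_l - e_{-l}` fixed by the copy of `SO(2l-1)` inside `K`. -/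
def diffVec (l : ℕ) : Fin (2 * l + 1) → ℂ :=
  stdVec (2 * l + 1) l - stdVec (2 * l + 1) (l + 2)

theorem betaForm_stdVec_mid (m : ℕ) :
    betaForm (2 * l + 1) (stdVec _ (l + 1)) (stdVec _ m) = if m = l + 1 then 1 else 0 := by
  rw [betaForm_stdVec_stdVec (by omega) (by omega)]
  congr 1
  simp only [eq_iff_iff]
  omega

theorem betaForm_diffVec_apply (x : Fin (2 * l + 1) → ℂ) :
    betaForm _ (diffVec l) x =
      betaForm _ (stdVec _ l) x - betaForm _ (stdVec _ (l + 2)) x := by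
  rw [diffVec, map_sub, LinearMap.sub_apply]

theorem betaForm_diffVec_stdVec (hl : 0 < l) (m : ℕ) :
    betaForm _ (diffVec l) (stdVec _ m) =
      (if m = l + 2 then 1 else 0) - if m = l then 1 else 0 := by
  rw [betaForm_diffVec_apply, betaForm_stdVec_stdVec hl (by omega),
    betaForm_stdVec_stdVec (by omega) (by omega)]
  congr 2 <;> simp only [eq_iff_iff] <;> omega

theorem isOrthogonal_of_mem_Kodd (hg : g ∈ Kodd l) : (betaForm (2 * l + 1)).IsOrthogonal g :=
  hg.1.2

theorem betaForm_stdVec_mid_apply_of_mem_Kodd (hg : g ∈ Kodd l) (x : Fin (2 * l + 1) → ℂ) :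
    betaForm _ (stdVec _ (l + 1)) (g x) = betaForm _ (stdVec _ (l + 1)) x := by
  conv_lhs => rw [← hg.2]
  exact isOrthogonal_of_mem_Kodd hg _ _

theorem mem_BOddSmall_iff :
    g ∈ BOddSmall l ↔ g ∈ Kodd l ∧ g (diffVec l) = diffVec l ∧
      ∀ k, (stdSub (2 * l + 1) k).map g.toLinearMap = stdSub (2 * l + 1) k := by
  rw [map_stdSub_eq_iff_forall_apply_stdVec_mem]
  simp only [BOddSmall, Kodd, diffVec, Set.mem_ofPred_eq, and_assoc]

theorem FyOddVec_one (l : ℕ) : FyOddVec l 1 =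
    Complex.I • diffVec l + ((√2 : ℂ) * Complex.I) • stdVec (2 * l + 1) (l + 1) := by
  simp only [FyOddVec, diffVec, if_true, smul_sub]
  abel

theorem betaForm_stdVec_mid_FyOddVec_one_ne_zero (l : ℕ) :
    betaForm _ (stdVec _ (l + 1)) (FyOddVec l 1) ≠ 0 := by
  have h_value : betaForm _ (stdVec _ (l + 1)) (FyOddVec l 1) = (√2 : ℂ) * Complex.I := by
    simp [FyOddVec_one, diffVec, betaForm_stdVec_mid]
  simp [h_value]

theorem apply_FyOddVec_one_eq_iff (h0 : g (stdVec _ (l + 1)) = stdVec _ (l + 1)) :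
    g (FyOddVec l 1) = FyOddVec l 1 ↔ g (diffVec l) = diffVec l := by
  rw [FyOddVec_one, map_add, map_smul, map_smul, h0, add_left_inj,
    smul_right_inj Complex.I_ne_zero]

theorem FyOddFlag_min (l k : ℕ) : FyOddFlag l (min k l) = FyOddFlag l k := by
  simp [FyOddFlag, isoFlagOf]

theorem FyOddFlag_zero (l : ℕ) : FyOddFlag l 0 = ⊥ := by
  simp [FyOddFlag, isoFlagOf]

theorem FyOddFlag_succ {k : ℕ} (hk : k < l) :
    FyOddFlag l (k + 1) = span ℂ {FyOddVec l 1} ⊔ stdSub (2 * l + 1) k := by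
  have h_tail : FyOddVec l '' Set.Icc (1 + 1) (k + 1) = stdVec (2 * l + 1) '' Set.Icc 1 k := by
    rw [← Set.image_add_const_Icc 1 1 k, Set.image_image]
    refine Set.image_congr fun m hm ↦ ?_
    simp [FyOddVec, show m ≠ 0 from Nat.one_le_iff_ne_zero.1 hm.1]
  rw [FyOddFlag, isoFlagOf, min_eq_left hk, ← Set.insert_Icc_add_one_left_eq_Icc (by omega),
    Set.image_insert_eq, span_insert, h_tail, stdSub]

theorem actFlag_FyOddFlag_eq_iff :
    actFlag (2 * l + 1) g (FyOddFlag l) = FyOddFlag l ↔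
      ∀ k < l, (span ℂ {FyOddVec l 1} ⊔ stdSub (2 * l + 1) k).map g.toLinearMap =
        span ℂ {FyOddVec l 1} ⊔ stdSub (2 * l + 1) k := by
  constructor
  · intro h k hk
    simpa only [actFlag, ← FyOddFlag_succ hk] using congrFun h (k + 1)
  · intro h
    funext k
    rw [actFlag, ← FyOddFlag_min]
    cases hk : min k l with
    | zero => rw [FyOddFlag_zero, Submodule.map_bot]
    | succ m => rw [FyOddFlag_succ (by omega), h m (by omega)]

theorem actFlag_FyOddFlag_eq_iff_of_mem_Kodd (hl : 0 < l) (hg : g ∈ Kodd l) :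
    actFlag (2 * l + 1) g (FyOddFlag l) = FyOddFlag l ↔
      g (diffVec l) = diffVec l ∧
        ∀ k < l, (stdSub (2 * l + 1) k).map g.toLinearMap = stdSub (2 * l + 1) k := by
  rw [actFlag_FyOddFlag_eq_iff, ← apply_FyOddVec_one_eq_iff hg.2]
  have h_coord := betaForm_stdVec_mid_apply_of_mem_Kodd hg
  have h_ne := betaForm_stdVec_mid_FyOddVec_one_ne_zero l
  constructor
  · intro h
    refine ⟨apply_eq_self_of_map_span_singleton_eq h_coord h_ne ?_, fun k hk ↦
      map_eq_of_map_span_singleton_sup_eq h_coord h_ne (fun x hx ↦ ?_) (h k hk)⟩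
    · simpa only [stdSub_zero, sup_bot_eq] using h 0 hl
    · exact betaForm_eq_zero_of_mem_stdSub (by omega)
        (stdVec_mem_stdSub (by omega) le_rfl) hx
  · rintro ⟨hv, h_sub⟩ k hk
    rw [Submodule.map_sup, h_sub k hk, map_span, Set.image_singleton, LinearEquiv.coe_coe, hv]

theorem betaForm_diffVec_self (hl : 0 < l) :
    betaForm _ (diffVec l) (diffVec l) = -2 := by
  nth_rw 2 [diffVec]
  rw [map_sub, betaForm_diffVec_stdVec hl, betaForm_diffVec_stdVec hl]
  norm_num

theorem isReflective_diffVec (hl : 0 < l) : (betaForm _).IsReflective (diffVec l) :=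
  .of_dvd_two _ ⟨-1, by rw [betaForm_diffVec_self hl]; norm_num⟩

/-- The reflection of `ℂ^{2l+1}` in `e_l - e_{-l}`, which swaps `e_l` and `e_{-l}`. -/
def diffReflection (hl : 0 < l) : (Fin (2 * l + 1) → ℂ) ≃ₗ[ℂ] (Fin (2 * l + 1) → ℂ) :=
  Module.reflection (isReflective_diffVec hl).coroot_apply_self

theorem diffReflection_apply_of_orthogonal (hl : 0 < l) {x : Fin (2 * l + 1) → ℂ}
    (hx : betaForm _ (diffVec l) x = 0) : diffReflection hl x = x :=
  reflection_coroot_apply_of_apply_eq_zero _ hx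

theorem diffReflection_apply_stdVec (hl : 0 < l) :
    diffReflection hl (stdVec _ (l + 2)) = stdVec _ l := by
  have h_coroot : (isReflective_diffVec hl).coroot _ (stdVec _ (l + 2)) = -1 := by
    have h_smul := (isReflective_diffVec hl).apply_self_mul_coroot_apply (y := stdVec _ (l + 2))
    rw [betaForm_diffVec_self hl, betaForm_diffVec_stdVec hl, if_pos rfl,
      if_neg (by omega)] at h_smul
    linear_combination (-1 / 2) * h_smul
  rw [diffReflection, Module.reflection_apply, h_coroot, diffVec]
  module

theorem diffReflection_isOrthogonal (hl : 0 < l) :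
    (betaForm _).IsOrthogonal (diffReflection hl) :=
  (isReflective_diffVec hl).isOrthogonal_reflection _ ⟨betaForm_comm⟩

theorem map_diffReflection_stdSub (hl : 0 < l) {k : ℕ} (hk : k < l) :
    (stdSub _ k).map (diffReflection hl).toLinearMap = stdSub _ k := by
  have h_fix : ∀ x ∈ stdSub _ k, diffReflection hl x = x := by
    intro x hx
    apply diffReflection_apply_of_orthogonal
    rw [betaForm_diffVec_apply,
      betaForm_eq_zero_of_mem_stdSub (by omega) (stdVec_mem_stdSub hl le_rfl) hx,
      betaForm_eq_zero_of_mem_stdSub (by omega) (stdVec_mem_stdSub (by omega) le_rfl) hx, sub_zero]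
  refine eq_of_le_of_finrank_eq ?_ (LinearEquiv.finrank_map_eq _ _)
  rintro _ ⟨x, hx, rfl⟩
  exact (h_fix x hx).symm ▸ hx

theorem map_stdSub_eq_of_apply_stdVec_mem (hl : 0 < l) (hg : (betaForm _).IsOrthogonal g)
    (h_lt : ∀ k < l, (stdSub (2 * l + 1) k).map g.toLinearMap = stdSub (2 * l + 1) k)
    (h_apply : g (stdVec _ l) ∈ stdSub (2 * l + 1) l) (k : ℕ) :
    (stdSub (2 * l + 1) k).map g.toLinearMap = stdSub (2 * l + 1) k := by
  refine map_stdSub_eq_of_two_mul_le hg (fun j hj ↦ ?_) k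
  rcases (show j ≤ l by omega).lt_or_eq with hjl | rfl
  · exact h_lt j hjl
  · obtain ⟨i, rfl⟩ := Nat.exists_eq_succ_of_ne_zero hl.ne'
    exact map_stdSub_succ_eq (h_lt i i.lt_succ_self) h_apply

theorem det_eq_one_of_apply_stdVec_mid (hg : (betaForm _).IsOrthogonal g)
    (h_sub : ∀ k, (stdSub (2 * l + 1) k).map g.toLinearMap = stdSub (2 * l + 1) k)
    (h_mid : g (stdVec _ (l + 1)) = stdVec _ (l + 1)) : LinearMap.det g.toLinearMap = 1 := by
  refine det_eq_one_of_map_stdSub_eq hg h_sub fun i hi ↦ ?_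
  have h_single : stdVec (2 * l + 1) (l + 1) = Pi.single i 1 := by
    rw [← stdVec_val_add_one]
    congr 2
    rw [Fin.ext_iff, Fin.val_rev] at hi
    omega
  rw [← h_single, h_mid, h_single, Pi.single_eq_same]

theorem sub_smul_stdVec_sub_smul_stdVec_mem_stdSub (hl : 0 < l) {x : Fin (2 * l + 1) → ℂ}
    (hx : x ∈ stdSub _ (l + 2)) (h_mid : betaForm _ (stdVec _ (l + 1)) x = 0) :
    x - betaForm _ (stdVec _ (l + 2)) x • stdVec _ l
      - betaForm _ (stdVec _ l) x • stdVec _ (l + 2) ∈ stdSub (2 * l + 1) (l - 1) := by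
  set w := x - betaForm _ (stdVec _ (l + 2)) x • stdVec _ l
    - betaForm _ (stdVec _ l) x • stdVec _ (l + 2) with hw_def
  have hw : w ∈ stdSub _ (l + 2) :=
    sub_mem (sub_mem hx (smul_mem _ _ (stdVec_mem_stdSub hl (by omega))))
      (smul_mem _ _ (stdVec_mem_stdSub (by omega) le_rfl))
  have hw_mid : w ∈ stdSub _ (l + 1) := by
    refine mem_stdSub_of_mem_succ hl (by omega) hw ?_
    simp only [hw_def, map_sub, map_smul, betaForm_stdVec_stdVec hl (show l ≤ 2 * l + 1 by omega)]
    simp [show l + l ≠ 2 * l + 1 + 1 by omega, show l + (l + 2) = 2 * l + 1 + 1 by omega]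
  have hw_l : w ∈ stdSub _ l := by
    refine mem_stdSub_of_mem_succ (m := l + 1) (by omega) (by omega) hw_mid ?_
    simp [hw_def, betaForm_stdVec_mid, h_mid]
  refine mem_stdSub_of_mem_succ (m := l + 2) (by omega) (by omega)
    (by rwa [Nat.sub_add_cancel hl]) ?_
  simp only [hw_def, map_sub, map_smul,
    betaForm_stdVec_stdVec (show 1 ≤ l + 2 by omega) (show l + 2 ≤ 2 * l + 1 by omega)]
  simp [show l + 2 + l = 2 * l + 1 + 1 by omega, show l + 2 + (l + 2) ≠ 2 * l + 1 + 1 by omega]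

/- Modulo `U_{l-1}` the vector `g e_l` is a combination `a e_l + c e_{-l}`; it is isotropic, which
gives `a c = 0`, and its product with `e_l - e_{-l}` is preserved, which gives `c - a = -1`. -/
theorem apply_stdVec_sub_mem_or_add_mem (hl : 0 < l) (hg : g ∈ Kodd l)
    (h_diff : g (diffVec l) = diffVec l)
    (h_sub : (stdSub (2 * l + 1) (l - 1)).map g.toLinearMap = stdSub (2 * l + 1) (l - 1)) :
    g (stdVec _ l) - stdVec _ l ∈ stdSub (2 * l + 1) (l - 1) ∨
      g (stdVec _ l) + stdVec _ (l + 2) ∈ stdSub (2 * l + 1) (l - 1) := by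
  set x := g (stdVec _ l) with hx_def
  set a := betaForm _ (stdVec _ (l + 2)) x
  set c := betaForm _ (stdVec _ l) x
  have hx : x ∈ stdSub _ (l + 2) := by
    have h_map : (stdSub (2 * l + 1) (l + 2)).map g.toLinearMap = stdSub _ (l + 2) := by
      rw [← orthogonal_stdSub, map_orthogonal_of_isOrthogonal (isOrthogonal_of_mem_Kodd hg),
        show 2 * l + 1 - (l + 2) = l - 1 by omega, h_sub]
    exact h_map.le (mem_map_of_mem (stdVec_mem_stdSub hl (by omega)))
  have hw : x - a • stdVec _ l - c • stdVec _ (l + 2) ∈ stdSub _ (l - 1) := by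
    refine sub_smul_stdVec_sub_smul_stdVec_mem_stdSub hl hx ?_
    rw [betaForm_stdVec_mid_apply_of_mem_Kodd hg, betaForm_stdVec_mid, if_neg (by omega)]
  have h_isotropic : a * c = 0 := by
    have h_self : betaForm _ x x = 0 := by
      rw [isOrthogonal_of_mem_Kodd hg, betaForm_stdVec_stdVec hl (by omega), if_neg (by omega)]
    have h_wx := betaForm_eq_zero_of_mem_stdSub (by omega) hw hx
    simp only [map_sub, map_smul, LinearMap.sub_apply, LinearMap.smul_apply, smul_eq_mul] at h_wx
    linear_combination (h_self - h_wx) / 2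
  have h_sub_eq : c - a = -1 := by
    rw [← betaForm_diffVec_apply, ← h_diff, hx_def, isOrthogonal_of_mem_Kodd hg,
      betaForm_diffVec_stdVec hl]
    simp
  rcases mul_eq_zero.1 h_isotropic with ha | hc
  · right
    have hc : c = -1 := by linear_combination h_sub_eq + ha
    simpa [ha, hc] using hw
  · left
    have ha : a = 1 := by linear_combination hc - h_sub_eq
    simpa [ha, hc] using hw

theorem map_stdSub_eq_of_mem_Kodd (hl : 0 < l) (hg : g ∈ Kodd l)
    (h_diff : g (diffVec l) = diffVec l)
    (h_lt : ∀ k < l, (stdSub (2 * l + 1) k).map g.toLinearMap = stdSub (2 * l + 1) k) (k : ℕ) :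
    (stdSub (2 * l + 1) k).map g.toLinearMap = stdSub (2 * l + 1) k := by
  rcases apply_stdVec_sub_mem_or_add_mem hl hg h_diff (h_lt _ (by omega)) with h_sub | h_add
  · refine map_stdSub_eq_of_apply_stdVec_mem hl (isOrthogonal_of_mem_Kodd hg) h_lt ?_ k
    rw [← sub_add_cancel (g _) (stdVec _ l)]
    exact add_mem (stdSub_mono (by omega) h_sub) (stdVec_mem_stdSub hl le_rfl)
  · exfalso
    set r := diffReflection hl
    have h_det_rg : LinearMap.det (g.trans r).toLinearMap = -1 := by
      rw [LinearEquiv.coe_trans, LinearMap.det_comp, hg.1.1, mul_one]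
      exact det_reflection _
    have h_orth : (betaForm _).IsOrthogonal (g.trans r) := fun x y ↦
      (diffReflection_isOrthogonal hl _ _).trans (isOrthogonal_of_mem_Kodd hg x y)
    have h_lt_rg : ∀ j < l, (stdSub _ j).map (g.trans r).toLinearMap = stdSub _ j := by
      intro j hj
      rw [LinearEquiv.coe_trans, Submodule.map_comp, h_lt j hj, map_diffReflection_stdSub hl hj]
    have h_mid : g.trans r (stdVec _ (l + 1)) = stdVec _ (l + 1) := by
      rw [LinearEquiv.trans_apply, hg.2]
      apply diffReflection_apply_of_orthogonal
      simp [betaForm_diffVec_stdVec hl]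
    have h_apply : g.trans r (stdVec _ l) ∈ stdSub _ l := by
      have h_image := (map_diffReflection_stdSub hl (show l - 1 < l by omega)).le
        (mem_map_of_mem h_add)
      rw [LinearEquiv.trans_apply, ← add_sub_cancel_right (g _) (stdVec _ (l + 2)), map_sub,
        diffReflection_apply_stdVec]
      exact sub_mem (stdSub_mono (by omega) h_image) (stdVec_mem_stdSub hl le_rfl)
    have h_det_one := det_eq_one_of_apply_stdVec_mid h_orth
      (map_stdSub_eq_of_apply_stdVec_mem hl h_orth h_lt_rg h_apply) h_mid
    norm_num [h_det_rg] at h_det_one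

end OddDimension

/-- The stabilizer of `F'_y` in `K` is the Borel subgroup `B_{2l-1}`. -/
theorem stmt_7 (l : ℕ) (hl : 2 ≤ l) :
    {g | g ∈ Kodd l ∧ actFlag (2 * l + 1) g (FyOddFlag l) = FyOddFlag l} = BOddSmall l := by
  ext g
  have hl_pos : 0 < l := by omega
  rw [mem_BOddSmall_iff]
  refine and_congr_right fun hg ↦ ?_
  rw [actFlag_FyOddFlag_eq_iff_of_mem_Kodd hl_pos hg]
  refine and_congr_right fun h_diff ↦ ?_
  exact ⟨map_stdSub_eq_of_mem_Kodd hl_pos hg h_diff, fun h k _ ↦ h k⟩
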